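/- arXiv:0907.2728 — 7 statements merged into one kernel-verified Lean document; each statement's English description precedes it below -/
import Mathlib

section
/- Let T be an n×n complex matrix with n distinct eigenvalues λ_1,…,λ_n, let u_i be nonzero eigenvectors of T with T u_i = λ_i u_i, and let v_j be nonzero eigenvectors of Tᴴ with Tᴴ v_j = conj(λ_j) v_j. Then every x ∈ ℂⁿ satisfies the expansion x = Σ_{j=1}^{n} (⟨x, v_j⟩ / ⟨u_j, v_j⟩) · u_j. -/
open Matrix BigOperators

/-- The standard Hermitian inner product on ℂⁿ, linear in the first slot and
conjugate-linear in the second. -/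
noncomputable def hinner {n : ℕ} (x y : Fin n → ℂ) : ℂ :=
  ∑ i, x i * (starRingEnd ℂ) (y i)

/-- A conjugation on ℂⁿ: a conjugate-linear, involutive, isometric map. -/
def IsConjugation {n : ℕ} (C : (Fin n → ℂ) → (Fin n → ℂ)) : Prop :=
  (∀ x y, C (x + y) = C x + C y) ∧
  (∀ (a : ℂ) (x), C (a • x) = (starRingEnd ℂ a) • C x) ∧
  (∀ x, C (C x) = x) ∧
  (∀ x y, hinner (C x) (C y) = hinner y x)

/-- A square complex matrix is UECSM if it is unitarily equivalent to a
complex symmetric matrix. -/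
def UECSM {m : Type*} [Fintype m] [DecidableEq m] (T : Matrix m m ℂ) : Prop :=
  ∃ Q : Matrix m m ℂ, Qᴴ * Q = 1 ∧ Q * Qᴴ = 1 ∧ (Qᴴ * T * Q)ᵀ = Qᴴ * T * Q

/-!
The functional `⟨·, v j⟩` is an eigenvector of the dual map of `T` for `lam j`, so it vanishes on
every `u i` with `i ≠ j`. It is therefore a nonzero multiple of the `j`-th coordinate functional of
the eigenbasis `u`, and evaluating at `u j` identifies the factor as `⟨u j, v j⟩`.
-/

section Eigenvectors

open Module

theorem dual_apply_eq_zero_of_mem_eigenspace {R M : Type*} [CommRing R] [NoZeroDivisors R]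
    [AddCommGroup M] [Module R M] {T : End R M} {φ : Dual R M} {x : M} {a b : R}
    (hx : x ∈ T.eigenspace a) (hφ : φ ∈ End.eigenspace T.dualMap b) (hab : a ≠ b) :
    φ x = 0 := by
  rw [End.mem_eigenspace_iff] at hx hφ
  have h : a * φ x = b * φ x :=
    calc
      a * φ x = φ (T x) := by rw [hx, map_smul, smul_eq_mul]
      _ = b * φ x := LinearMap.congr_fun hφ x
  exact (mul_eq_mul_right_iff.mp h).resolve_left hab

theorem dual_eq_smul_coord {ι R M : Type*} [CommSemiring R] [AddCommMonoid M] [Module R M]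
    (b : Basis ι R M) {φ : Dual R M} {j : ι} (hφ : ∀ i, i ≠ j → φ (b i) = 0) :
    φ = φ (b j) • b.coord j := by
  refine b.ext fun i => ?_
  rcases eq_or_ne i j with rfl | hij
  · simp
  · simp [hφ i hij, hij]

variable {ι K V : Type*} [Field K] [AddCommGroup V] [Module K V]

theorem coord_apply_eq_div (b : Basis ι K V) {φ : Dual K V} {j : ι} (hφ0 : φ ≠ 0)
    (hφ : ∀ i, i ≠ j → φ (b i) = 0) (x : V) : b.coord j x = φ x / φ (b j) := by
  have hcoord : φ = φ (b j) • b.coord j := dual_eq_smul_coord b hφ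
  have hne : φ (b j) ≠ 0 := fun h => hφ0 (by rw [hcoord, h, zero_smul])
  rw [eq_div_iff hne, mul_comm]
  exact (LinearMap.congr_fun hcoord x).symm

theorem expansion_in_u_basis_general [Fintype ι] [FiniteDimensional K V]
    (hcard : Fintype.card ι = finrank K V) (T : End K V) {lam : ι → K}
    (hlam : Function.Injective lam) {u : ι → V} {φ : ι → Dual K V}
    (hu : ∀ i, T.HasEigenvector (lam i) (u i))
    (hφ : ∀ j, End.HasEigenvector T.dualMap (lam j) (φ j)) (x : V) :
    x = ∑ j, (φ j x / φ j (u j)) • u j := by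
  have hli : LinearIndependent K u := T.eigenvectors_linearIndependent' lam hlam u hu
  let b : Basis ι K V := Basis.mk hli (hli.span_eq_top_of_card_eq_finrank' hcard).ge
  have hb (i : ι) : b i = u i := Basis.mk_apply hli _ i
  have horth (j i : ι) (hij : i ≠ j) : φ j (b i) = 0 :=
    dual_apply_eq_zero_of_mem_eigenspace (hb i ▸ (hu i).1) (hφ j).1 (hlam.ne hij)
  calc
    x = ∑ j, b.coord j x • b j := (b.sum_repr x).symm
    _ = ∑ j, (φ j x / φ j (u j)) • u j := by
      simp only [coord_apply_eq_div b (hφ _).2 (horth _), hb]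

end Eigenvectors

section ConjTranspose

open Module

variable {ι R : Type*} [Fintype ι] [DecidableEq ι]

theorem dualMap_toLin'_dotProductEquiv [CommSemiring R] (T : Matrix ι ι R) (w : ι → R) :
    (toLin' T).dualMap (dotProductEquiv R ι w) = dotProductEquiv R ι (w ᵥ* T) :=
  LinearMap.ext fun x => dotProduct_mulVec w T x

theorem hasEigenvector_dualMap_of_conjTranspose_mulVec [CommRing R] [StarRing R]
    {T : Matrix ι ι R} {a : R} {w : ι → R} (hw0 : w ≠ 0) (hw : Tᴴ *ᵥ w = star a • w) :
    End.HasEigenvector (toLin' T).dualMap a (dotProductEquiv R ι (star w)) := by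
  have hleft : star w ᵥ* T = a • star w := by
    simpa only [star_mulVec, conjTranspose_conjTranspose, star_smul, star_star]
      using congrArg star hw
  refine End.hasEigenvector_iff.mpr ⟨End.mem_eigenspace_iff.mpr ?_, ?_⟩
  · rw [dualMap_toLin'_dotProductEquiv, hleft, map_smul]
  · exact (LinearEquiv.map_ne_zero_iff _).mpr (star_ne_zero.mpr hw0)

end ConjTranspose

theorem hinner_eq_dotProductEquiv {n : ℕ} (x y : Fin n → ℂ) :
    hinner x y = dotProductEquiv ℂ (Fin n) (star y) x :=
  dotProduct_comm x (star y)

/-- Expansion of an arbitrary vector in the eigenbasis `u_1, …, u_n`. -/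
theorem expansion_in_u_basis {n : ℕ} (T : Matrix (Fin n) (Fin n) ℂ)
    (lam : Fin n → ℂ) (hlam : Function.Injective lam)
    (u v : Fin n → (Fin n → ℂ))
    (hu0 : ∀ i, u i ≠ 0) (hv0 : ∀ j, v j ≠ 0)
    (hu : ∀ i, T.mulVec (u i) = lam i • u i)
    (hv : ∀ j, Tᴴ.mulVec (v j) = (starRingEnd ℂ) (lam j) • v j) :
    ∀ x : Fin n → ℂ, x = ∑ j, (hinner x (v j) / hinner (u j) (v j)) • u j := by
  intro x
  simpa only [hinner_eq_dotProductEquiv] using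
    expansion_in_u_basis_general (by simp) (toLin' T) hlam
      (fun i => ⟨Module.End.mem_eigenspace_iff.mpr (hu i), hu0 i⟩)
      (fun j => hasEigenvector_dualMap_of_conjTranspose_mulVec (hv0 j) (hv j)) x
end

section
/- An n×n complex matrix T is unitarily equivalent to a complex symmetric matrix if and only if there exists a conjugation C on ℂⁿ such that T x = C(Tᴴ(C x)) for every x ∈ ℂⁿ (i.e., T = C Tᴴ C as operators). -/
open Matrix BigOperators

/-!
In coordinates with respect to the columns of a unitary `Q`, entrywise conjugation is a conjugation
`C_Q x = Q (Qᴴ x)‾`, and `C_Q Tᴴ C_Q = Q (Qᴴ T Q)ᵀ Qᴴ`; hence `T = C_Q Tᴴ C_Q` says exactly that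
`Qᴴ T Q` is symmetric. Every conjugation `C` is some `C_Q`: inner products of vectors fixed by `C`
are real, and `x = (x + C x) / 2 + (x - C x) / 2` writes any vector as a fixed vector plus `i` times
a fixed vector, so a real orthonormal basis of the fixed vectors is a complex orthonormal basis of
the whole space.
-/

open Module WithLp
open scoped ComplexConjugate InnerProductSpace

section RealForm

variable {E : Type*}

section Module

variable [AddCommGroup E] [Module ℂ E]

/-- The real form of a conjugate-linear map `C`: the real subspace of the vectors fixed by `C`. -/
def realForm (C : E →ₗ⋆[ℂ] E) : Submodule ℝ E where
  carrier := {x | C x = x}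
  add_mem' {x y} (hx : C x = x) (hy : C y = y) := by simp [hx, hy]
  zero_mem' := map_zero C
  smul_mem' r x (hx : C x = x) := by
    simp only [Set.mem_ofPred_eq, ← Complex.coe_smul, map_smulₛₗ, hx, Complex.conj_ofReal]

@[simp]
theorem mem_realForm {C : E →ₗ⋆[ℂ] E} {x : E} : x ∈ realForm C ↔ C x = x :=
  Iff.rfl

theorem span_realForm_eq_top {C : E →ₗ⋆[ℂ] E} (hC : Function.Involutive C) :
    Submodule.span ℂ (realForm C : Set E) = ⊤ := by
  refine Submodule.eq_top_iff'.2 fun x => ?_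
  have re_mem : x + C x ∈ realForm C := by simp [hC x, add_comm]
  have im_mem : Complex.I • (x - C x) ∈ realForm C := by simp [hC x, ← smul_neg]
  have decomposition :
      x = (1 / 2 : ℂ) • (x + C x) + (-Complex.I / 2) • (Complex.I • (x - C x)) := by
    have coeff_eq_half : -Complex.I / 2 * Complex.I = 1 / 2 := by
      rw [div_mul_eq_mul_div, neg_mul, Complex.I_mul_I, neg_neg]
    rw [smul_smul, coeff_eq_half]
    module
  rw [decomposition]
  exact add_mem (Submodule.smul_mem _ _ (Submodule.subset_span re_mem))
    (Submodule.smul_mem _ _ (Submodule.subset_span im_mem))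

end Module

attribute [local instance] InnerProductSpace.complexToReal

variable [NormedAddCommGroup E] [InnerProductSpace ℂ E] {C : E →ₗ⋆[ℂ] E}

theorem inner_eq_ofReal_of_mem_realForm (hCinner : ∀ x y, ⟪C x, C y⟫_ℂ = ⟪y, x⟫_ℂ) {x y : E}
    (hx : x ∈ realForm C) (hy : y ∈ realForm C) : ⟪x, y⟫_ℂ = (⟪x, y⟫_ℝ : ℂ) := by
  have self_conj : conj ⟪x, y⟫_ℂ = ⟪x, y⟫_ℂ := by
    rw [inner_conj_symm, ← hCinner, mem_realForm.1 hx, mem_realForm.1 hy]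
  exact (Complex.conj_eq_iff_re.1 self_conj).symm

theorem orthonormal_coe_realForm (hCinner : ∀ x y, ⟪C x, C y⟫_ℂ = ⟪y, x⟫_ℂ) {ι : Type*}
    {v : ι → realForm C} (hv : Orthonormal ℝ v) : Orthonormal ℂ fun i => (v i : E) := by
  classical
  rw [orthonormal_iff_ite] at hv ⊢
  intro i j
  rw [inner_eq_ofReal_of_mem_realForm hCinner (v i).2 (v j).2, ← Submodule.coe_inner, hv]
  split_ifs <;> simp

theorem exists_orthonormalBasis_forall_map_eq_self [FiniteDimensional ℂ E]
    (hC : Function.Involutive C) (hCinner : ∀ x y, ⟪C x, C y⟫_ℂ = ⟪y, x⟫_ℂ)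
    {ι : Type*} [Fintype ι] (card_ι : finrank ℂ E = Fintype.card ι) :
    ∃ b : OrthonormalBasis ι ℂ E, ∀ i, C (b i) = b i := by
  let u := stdOrthonormalBasis ℝ (realForm C)
  have u_span : realForm C ≤
      (Submodule.span ℂ (Set.range fun i => (u i : E))).restrictScalars ℝ := by
    intro x hx
    have expansion : x = ∑ i, u.repr ⟨x, hx⟩ i • (u i : E) := by
      simpa using (congrArg Subtype.val (u.sum_repr ⟨x, hx⟩)).symm
    rw [expansion]
    exact sum_mem fun i _ => Submodule.smul_mem _ _ (Submodule.subset_span ⟨i, rfl⟩)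
  have u_total : ⊤ ≤ Submodule.span ℂ (Set.range fun i => (u i : E)) := by
    rw [← span_realForm_eq_top hC]
    exact Submodule.span_le.2 u_span
  let b := OrthonormalBasis.mk (orthonormal_coe_realForm hCinner u.orthonormal) u_total
  let e := Fintype.equivOfCardEq ((finrank_eq_card_basis b.toBasis).symm.trans card_ι)
  exact ⟨b.reindex e, fun i => by simpa [b] using mem_realForm.1 (u (e.symm i)).2⟩

end RealForm

section ColumnConj

variable {m R : Type*} [Fintype m] [CommRing R] [StarRing R]

/-- Entrywise conjugation of coordinates with respect to the columns of `Q`. For unitary `Q` this is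
the conjugation on `m → R` fixing every column of `Q`, and the definition uses `Qᴴ` for the inverse
of `Q`. -/
def columnConj (Q : Matrix m m R) (x : m → R) : m → R :=
  Q *ᵥ star (Qᴴ *ᵥ x)

theorem columnConj_conjTranspose_mulVec_columnConj (Q T : Matrix m m R) (x : m → R) :
    columnConj Q (Tᴴ *ᵥ columnConj Q x) = (Q * (Qᴴ * T * Q)ᵀ * Qᴴ) *ᵥ x := by
  have star_mulVec_star (M : Matrix m m R) (y : m → R) : star (Mᴴ *ᵥ star y) = Mᵀ *ᵥ y := by
    rw [star_mulVec, star_star, conjTranspose_conjTranspose, mulVec_transpose]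
  have conj_adjoint : Qᴴ * (Tᴴ * Q) = (Qᴴ * T * Q)ᴴ := by
    simp only [conjTranspose_mul, conjTranspose_conjTranspose, Matrix.mul_assoc]
  calc columnConj Q (Tᴴ *ᵥ columnConj Q x)
      = Q *ᵥ star ((Qᴴ * T * Q)ᴴ *ᵥ star (Qᴴ *ᵥ x)) := by
        simp only [columnConj, mulVec_mulVec, conj_adjoint]
    _ = (Q * (Qᴴ * T * Q)ᵀ * Qᴴ) *ᵥ x := by
        rw [star_mulVec_star, mulVec_mulVec, mulVec_mulVec]

variable [DecidableEq m]

theorem isSymm_conjTranspose_mul_mul_iff {Q : Matrix m m R} (hQ : Q ∈ unitaryGroup m R)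
    (T : Matrix m m R) : (Qᴴ * T * Q).IsSymm ↔
      ∀ x, T *ᵥ x = columnConj Q (Tᴴ *ᵥ columnConj Q x) := by
  have star_mul_self : Qᴴ * Q = 1 := hQ.1
  have mul_star_self : Q * Qᴴ = 1 := hQ.2
  simp_rw [columnConj_conjTranspose_mulVec_columnConj, ← ext_iff_mulVec]
  constructor <;> intro h
  · calc T = (Q * Qᴴ) * T * (Q * Qᴴ) := by rw [mul_star_self, Matrix.one_mul, Matrix.mul_one]
      _ = Q * (Qᴴ * T * Q) * Qᴴ := by simp only [Matrix.mul_assoc]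
      _ = Q * (Qᴴ * T * Q)ᵀ * Qᴴ := by rw [h.eq]
  · calc (Qᴴ * T * Q)ᵀ = (Qᴴ * Q) * (Qᴴ * T * Q)ᵀ * (Qᴴ * Q) := by
          rw [star_mul_self, Matrix.one_mul, Matrix.mul_one]
      _ = Qᴴ * (Q * (Qᴴ * T * Q)ᵀ * Qᴴ) * Q := by simp only [Matrix.mul_assoc]
      _ = Qᴴ * T * Q := by rw [← h]

theorem columnConj_involutive {Q : Matrix m m R} (hQ : Q ∈ unitaryGroup m R) :
    Function.Involutive (columnConj Q) := by
  have star_mul_self : Qᴴ * Q = 1 := hQ.1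
  have mul_star_self : Q * Qᴴ = 1 := hQ.2
  intro x
  simp only [columnConj, mulVec_mulVec, star_mul_self, one_mulVec, star_star, mul_star_self]

end ColumnConj

section OrthonormalBasis

variable {ι 𝕜 : Type*} [Fintype ι] [RCLike 𝕜]

theorem map_eq_sum_conj_inner_smul {E : Type*} [NormedAddCommGroup E] [InnerProductSpace 𝕜 E]
    {C : E →ₗ⋆[𝕜] E} (b : OrthonormalBasis ι 𝕜 E) (hb : ∀ i, C (b i) = b i) (x : E) :
    C x = ∑ i, conj ⟪b i, x⟫_𝕜 • b i := by
  conv_lhs => rw [← b.sum_repr' x]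
  simp only [map_sum, map_smulₛₗ, hb]

theorem toLp_columnConj_toMatrix (b : OrthonormalBasis ι 𝕜 (EuclideanSpace 𝕜 ι)) (x : ι → 𝕜) :
    toLp 2 (columnConj ((EuclideanSpace.basisFun ι 𝕜).toBasis.toMatrix b) x) =
      ∑ i, conj ⟪b i, toLp 2 x⟫_𝕜 • b i := by
  classical
  ext j
  simp [columnConj, mulVec, dotProduct, Basis.toMatrix_apply, PiLp.inner_apply, mul_comm]

end OrthonormalBasis

theorem hinner_star_star {n : ℕ} (x y : Fin n → ℂ) : hinner (star x) (star y) = hinner y x := by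
  simp [hinner, mul_comm]

theorem hinner_mulVec_left {n : ℕ} (T : Matrix (Fin n) (Fin n) ℂ) (x y : Fin n → ℂ) :
    hinner (T *ᵥ x) y = hinner x (Tᴴ *ᵥ y) := by
  change T *ᵥ x ⬝ᵥ star y = x ⬝ᵥ star (Tᴴ *ᵥ y)
  rw [star_mulVec, conjTranspose_conjTranspose, dotProduct_comm, dotProduct_mulVec, dotProduct_comm]

theorem isConjugation_columnConj {n : ℕ} {Q : Matrix (Fin n) (Fin n) ℂ}
    (hQ : Q ∈ unitaryGroup (Fin n) ℂ) : IsConjugation (columnConj Q) := by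
  have star_mul_self : Qᴴ * Q = 1 := hQ.1
  have mul_star_self : Q * Qᴴ = 1 := hQ.2
  refine ⟨fun x y => ?_, fun a x => ?_, columnConj_involutive hQ, fun x y => ?_⟩
  · simp [columnConj, mulVec_add]
  · simp [columnConj, mulVec_smul]
  · calc hinner (columnConj Q x) (columnConj Q y)
        = hinner (star (Qᴴ *ᵥ x)) (star (Qᴴ *ᵥ y)) := by
          rw [columnConj, columnConj, hinner_mulVec_left, mulVec_mulVec, star_mul_self, one_mulVec]
      _ = hinner (Qᴴ *ᵥ y) (Qᴴ *ᵥ x) := hinner_star_star _ _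
      _ = hinner y x := by
          rw [hinner_mulVec_left, conjTranspose_conjTranspose, mulVec_mulVec, mul_star_self,
            one_mulVec]

namespace IsConjugation

variable {n : ℕ} {C : (Fin n → ℂ) → Fin n → ℂ}

/-- A conjugation on `ℂⁿ` as a conjugate-linear map of the Euclidean space, where Mathlib's inner
product is available. -/
def toEuclidean (hC : IsConjugation C) :
    EuclideanSpace ℂ (Fin n) →ₗ⋆[ℂ] EuclideanSpace ℂ (Fin n) where
  toFun x := toLp 2 (C (ofLp x))
  map_add' x y := by rw [ofLp_add, hC.1, toLp_add]
  map_smul' a x := by rw [ofLp_smul, hC.2.1, toLp_smul]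

theorem exists_eq_columnConj (hC : IsConjugation C) :
    ∃ Q ∈ unitaryGroup (Fin n) ℂ, C = columnConj Q := by
  have involutive : Function.Involutive hC.toEuclidean := fun x => by
    simp [toEuclidean, hC.2.2.1 (ofLp x)]
  obtain ⟨b, hb⟩ := exists_orthonormalBasis_forall_map_eq_self involutive
    (fun x y => hC.2.2.2 (ofLp y) (ofLp x)) finrank_euclideanSpace
  refine ⟨(EuclideanSpace.basisFun (Fin n) ℂ).toBasis.toMatrix b,
    (EuclideanSpace.basisFun (Fin n) ℂ).toMatrix_orthonormalBasis_mem_unitary b, ?_⟩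
  funext x
  apply toLp_injective 2
  rw [toLp_columnConj_toMatrix, ← map_eq_sum_conj_inner_smul b hb]
  rfl

end IsConjugation

theorem uecsm_iff_exists_mem_unitaryGroup {m : Type*} [Fintype m] [DecidableEq m]
    (T : Matrix m m ℂ) : UECSM T ↔ ∃ Q ∈ unitaryGroup m ℂ, (Qᴴ * T * Q).IsSymm := by
  simp only [UECSM, Unitary.mem_iff, star_eq_conjTranspose, Matrix.IsSymm, and_assoc]

/-- `T` is UECSM if and only if `T = C Tᴴ C` for some conjugation `C` on ℂⁿ. -/
theorem uecsm_iff_exists_conjugation {n : ℕ} (T : Matrix (Fin n) (Fin n) ℂ) :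
    UECSM T ↔ ∃ C : (Fin n → ℂ) → (Fin n → ℂ), IsConjugation C ∧
      ∀ x : Fin n → ℂ, T.mulVec x = C (Tᴴ.mulVec (C x)) := by
  rw [uecsm_iff_exists_mem_unitaryGroup]
  constructor
  · rintro ⟨Q, hQ, symm⟩
    exact ⟨columnConj Q, isConjugation_columnConj hQ,
      (isSymm_conjTranspose_mul_mul_iff hQ T).1 symm⟩
  · rintro ⟨C, hC, hT⟩
    obtain ⟨Q, hQ, rfl⟩ := hC.exists_eq_columnConj
    exact ⟨Q, hQ, (isSymm_conjTranspose_mul_mul_iff hQ T).2 hT⟩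
end

section
/- (Grammian Test) Let T be an n×n complex matrix with n distinct eigenvalues λ_1,…,λ_n, let u_1,…,u_n be unit eigenvectors of T with T u_i = λ_i u_i, and let v_1,…,v_n be unit eigenvectors of Tᴴ with Tᴴ v_i = conj(λ_i) v_i. Let U and V be the n×n matrices whose columns are u_1,…,u_n and v_1,…,v_n respectively. If T is UECSM, then the Gram matrices UᴴU and VᴴV have the same characteristic polynomial (equivalently, the same eigenvalues with multiplicity). -/
open Matrix BigOperators

/-!
If `T * W = W * Tᵀ` with `W` unitary, then conjugating `Tᴴ *ᵥ v = star μ • v` gives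
`T *ᵥ (W *ᵥ star v) = μ • (W *ᵥ star v)`. As the eigenvalues are distinct, the columns of
`W * Vᴴᵀ` are multiples of those of `U`, and comparing lengths shows that the factors are
unimodular: `W * Vᴴᵀ = U * D` with `D` diagonal and unitary. Taking Gram matrices of both sides,
`(Vᴴ * V)ᵀ = Dᴴ * (Uᴴ * U) * D`. If `Qᴴ * T * Q` is symmetric with `Q` unitary, then `W = Q * Qᵀ`
is such an intertwiner.
-/

section Diagonalization

variable {m n R K : Type*} [Fintype m]

theorem mul_eq_mul_diagonal_iff [Fintype n] [DecidableEq n] [CommSemiring R] {T : Matrix m m R}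
    {U : Matrix m n R} {lam : n → R} :
    T * U = U * diagonal lam ↔ ∀ i, T *ᵥ U.col i = lam i • U.col i := by
  have col_mul_diagonal (i : n) : (U * diagonal lam).col i = lam i • U.col i := by
    ext j
    simp [mul_comm]
  exact ⟨fun h i ↦ (congrArg (col · i) h).trans (col_mul_diagonal i),
    fun h ↦ ext_col fun i ↦ (h i).trans (col_mul_diagonal i).symm⟩

variable [DecidableEq m]

theorem isUnit_of_mul_eq_mul_diagonal [Field K] {T U : Matrix m m K} {lam : m → K}
    (hlam : Function.Injective lam) (hTU : T * U = U * diagonal lam)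
    (hU : ∀ i, U.col i ≠ 0) : IsUnit U :=
  linearIndependent_cols_iff_isUnit.1 <|
    Module.End.eigenvectors_linearIndependent' (toLin' T) lam hlam U.col fun i ↦
      ⟨Module.End.mem_eigenspace_iff.2 (mul_eq_mul_diagonal_iff.1 hTU i), hU i⟩

theorem isDiag_of_commute_diagonal [CommRing R] [NoZeroDivisors R] {M : Matrix m m R} {lam : m → R}
    (hlam : Function.Injective lam) (hM : Commute (diagonal lam) M) : M.IsDiag := by
  intro i j hij
  have hentry : lam i * M i j = M i j * lam j := by
    simpa using congrFun₂ hM.eq i j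
  have hprod : (lam i - lam j) * M i j = 0 := by linear_combination hentry
  exact (mul_eq_zero.1 hprod).resolve_left (sub_ne_zero.2 (hlam.ne hij))

theorem exists_eq_mul_diagonal [CommRing R] [NoZeroDivisors R] {T U X : Matrix m m R} {lam : m → R}
    (hlam : Function.Injective lam) (hU : IsUnit U) (hTU : T * U = U * diagonal lam)
    (hTX : T * X = X * diagonal lam) : ∃ d : m → R, X = U * diagonal d := by
  obtain ⟨M, rfl⟩ : U ∣ X := hU.dvd
  have hM : Commute (diagonal lam) M := hU.mul_left_cancel <| by
    rw [← Matrix.mul_assoc, ← hTU, Matrix.mul_assoc, hTX, Matrix.mul_assoc]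
  exact ⟨M.diag, by rw [(isDiag_of_commute_diagonal hlam hM).diagonal_diag]⟩

end Diagonalization

section Gram

variable {m n R : Type*} [Fintype m]

theorem gram_conjTranspose_transpose [CommSemiring R] [StarRing R] (A : Matrix m n R) :
    Aᴴᵀᴴ * Aᴴᵀ = (Aᴴ * A)ᵀ := by
  rw [transpose_mul, conjTranspose_transpose_eq_transpose_conjTranspose,
    conjTranspose_conjTranspose]

variable [DecidableEq m]

theorem gram_unitary_mul [CommRing R] [StarRing R] {W : Matrix m m R}
    (hW : W ∈ unitaryGroup m R) (A : Matrix m n R) : (W * A)ᴴ * (W * A) = Aᴴ * A := by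
  rw [conjTranspose_mul, Matrix.mul_assoc, ← Matrix.mul_assoc Wᴴ, ← star_eq_conjTranspose W,
    mem_unitaryGroup_iff'.1 hW, Matrix.one_mul]

theorem charpoly_gram_mul_unitary [Fintype n] [CommRing R] [StarRing R] {D : Matrix m m R}
    (hD : D ∈ unitaryGroup m R) (A : Matrix n m R) :
    ((A * D)ᴴ * (A * D)).charpoly = (Aᴴ * A).charpoly := by
  rw [conjTranspose_mul, Matrix.mul_assoc, charpoly_mul_comm, ← star_eq_conjTranspose D,
    ← Matrix.mul_assoc Aᴴ, Matrix.mul_assoc _ D, mem_unitaryGroup_iff.1 hD, Matrix.mul_one]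

theorem diagonal_mem_unitaryGroup_of_diag_gram_eq [Fintype n] [CommRing R] [NoZeroDivisors R]
    [StarRing R] {A : Matrix n m R} {d : m → R} (hA : ∀ i, (Aᴴ * A) i i ≠ 0)
    (hd : ((A * diagonal d)ᴴ * (A * diagonal d)).diag = (Aᴴ * A).diag) :
    diagonal d ∈ unitaryGroup m R := by
  have star_mul_self_eq_one (i : m) : star (d i) * d i = 1 := by
    have hlength : star (d i) * ((Aᴴ * A) i i * d i) = (Aᴴ * A) i i := by
      have h := congrFun hd i
      rwa [conjTranspose_mul, diagonal_conjTranspose, Matrix.mul_assoc, diag_apply, diagonal_mul,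
        ← Matrix.mul_assoc, mul_diagonal, diag_apply] at h
    apply mul_left_cancel₀ (hA i)
    linear_combination hlength
  rw [mem_unitaryGroup_iff', star_eq_conjTranspose, diagonal_conjTranspose, diagonal_mul_diagonal,
    ← diagonal_one]
  exact congrArg diagonal (funext star_mul_self_eq_one)

end Gram

section Transpose

variable {m n R K : Type*} [Fintype m]

theorem mul_mul_conjTranspose_transpose_eq_mul_diagonal [Fintype n] [DecidableEq n] [CommSemiring R]
    [StarRing R] {T W : Matrix m m R} {V : Matrix m n R} {lam : n → R}
    (hTW : T * W = W * Tᵀ) (hTV : Tᴴ * V = V * diagonal (star lam)) :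
    T * (W * Vᴴᵀ) = W * Vᴴᵀ * diagonal lam := by
  have hconj : Tᵀ * Vᴴᵀ = Vᴴᵀ * diagonal lam := by
    simpa using congrArg (·ᴴᵀ) hTV
  rw [← Matrix.mul_assoc, hTW, Matrix.mul_assoc, hconj, Matrix.mul_assoc]

variable [DecidableEq m]

theorem UECSM.exists_unitary_mul_eq_mul_transpose {T : Matrix m m ℂ} (hT : UECSM T) :
    ∃ W ∈ unitaryGroup m ℂ, T * W = W * Tᵀ := by
  obtain ⟨Q, hQ, hQ', hsymm⟩ := hT
  have hQmem : Q ∈ unitaryGroup m ℂ := mem_unitaryGroup_iff'.2 hQ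
  refine ⟨Q * Qᵀ, mul_mem hQmem (transpose_mem_unitaryGroup_iff.2 hQmem), ?_⟩
  calc T * (Q * Qᵀ) = Q * Qᴴ * T * (Q * Qᵀ) := by rw [hQ', Matrix.one_mul]
    _ = Q * (Qᴴ * T * Q) * Qᵀ := by simp only [Matrix.mul_assoc]
    _ = Q * (Qᴴ * T * Q)ᵀ * Qᵀ := by rw [hsymm]
    _ = Q * Qᵀ * Tᵀ * (Q * Qᴴ)ᵀ := by simp only [transpose_mul, Matrix.mul_assoc]
    _ = Q * Qᵀ * Tᵀ := by rw [hQ', transpose_one, Matrix.mul_one]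

theorem grammian_test_general [Field K] [StarRing K] {T U V W : Matrix m m K} {lam : m → K}
    (hlam : Function.Injective lam) (hTU : T * U = U * diagonal lam)
    (hTV : Tᴴ * V = V * diagonal (star lam)) (hW : W ∈ unitaryGroup m K) (hTW : T * W = W * Tᵀ)
    (hUV : (Uᴴ * U).diag = (Vᴴ * V).diag) (hU : ∀ i, (Uᴴ * U) i i ≠ 0) :
    (Uᴴ * U).charpoly = (Vᴴ * V).charpoly := by
  have hcol (i : m) : U.col i ≠ 0 := fun h ↦ hU i <| by
    rw [mul_apply', ← col_apply', h, dotProduct_zero]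
  obtain ⟨d, hd⟩ : ∃ d : m → K, W * Vᴴᵀ = U * diagonal d :=
    exists_eq_mul_diagonal hlam (isUnit_of_mul_eq_mul_diagonal hlam hTU hcol) hTU
      (mul_mul_conjTranspose_transpose_eq_mul_diagonal hTW hTV)
  have hgram : (U * diagonal d)ᴴ * (U * diagonal d) = (Vᴴ * V)ᵀ := by
    rw [← hd, gram_unitary_mul hW, gram_conjTranspose_transpose]
  have hunitary : diagonal d ∈ unitaryGroup m K :=
    diagonal_mem_unitaryGroup_of_diag_gram_eq hU (by rw [hgram, diag_transpose, hUV])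
  rw [← charpoly_gram_mul_unitary hunitary U, hgram, charpoly_transpose]

end Transpose

theorem gram_apply_self_eq_hinner {n : ℕ} (u : Fin n → Fin n → ℂ) (i : Fin n) :
    ((of fun r c ↦ u c r)ᴴ * of fun r c ↦ u c r) i i = hinner (u i) (u i) :=
  dotProduct_comm _ _

/-- (Grammian Test) If `T` is UECSM then the Gram matrices `UᴴU` and `VᴴV` have
the same eigenvalues with multiplicity, i.e. the same characteristic polynomial. -/
theorem grammian_test {n : ℕ} (T : Matrix (Fin n) (Fin n) ℂ)
    (lam : Fin n → ℂ) (hlam : Function.Injective lam)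
    (u v : Fin n → (Fin n → ℂ))
    (hu1 : ∀ i, hinner (u i) (u i) = 1)
    (hu : ∀ i, T.mulVec (u i) = lam i • u i)
    (hv1 : ∀ i, hinner (v i) (v i) = 1)
    (hv : ∀ i, Tᴴ.mulVec (v i) = (starRingEnd ℂ) (lam i) • v i)
    (U V : Matrix (Fin n) (Fin n) ℂ)
    (hU : U = Matrix.of fun r c => u c r)
    (hV : V = Matrix.of fun r c => v c r)
    (hT : UECSM T) :
    (Uᴴ * U).charpoly = (Vᴴ * V).charpoly := by
  subst hU hV
  obtain ⟨W, hW, hTW⟩ := hT.exists_unitary_mul_eq_mul_transpose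
  refine grammian_test_general hlam (mul_eq_mul_diagonal_iff.2 hu)
    (mul_eq_mul_diagonal_iff.2 hv) hW hTW (funext fun i ↦ ?_) fun i ↦ ?_
  · simp only [diag_apply, gram_apply_self_eq_hinner, hu1, hv1]
  · simp only [gram_apply_self_eq_hinner, hu1, ne_eq, one_ne_zero, not_false_eq_true]
end

section
/- Every 2×2 complex matrix is UECSM: for every 2×2 matrix T over ℂ there exists a 2×2 unitary matrix Q such that Qᴴ T Q equals its own transpose. -/
open Matrix BigOperators

/-!
If `Qᴴ H Q = K`, then `tr (H T) = tr (K (Qᴴ T Q))`, and for a nonzero skew-symmetric `2 × 2` matrix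
`K` this trace vanishes exactly when `Qᴴ T Q` is symmetric. The traceless Hermitian `2 × 2` matrices
form a real vector space of dimension three, whereas `H ↦ tr (H T)` takes values in `ℂ`, of real
dimension two, so some nonzero traceless Hermitian `H` satisfies `tr (H T) = 0`. Its eigenvalues
are `±r` with `r ≠ 0`, the same as those of the skew-symmetric Hermitian matrix with off-diagonal
entries `± r i`, and the spectral theorem provides `Q`.
-/

theorem exists_unitary_conj_eq_of_isHermitian_of_charpoly_eq {𝕜 n : Type*} [RCLike 𝕜] [Fintype n]
    [DecidableEq n] {A B : Matrix n n 𝕜} (hA : A.IsHermitian) (hB : B.IsHermitian)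
    (h : A.charpoly = B.charpoly) : ∃ Q ∈ unitaryGroup n 𝕜, Qᴴ * A * Q = B := by
  let Q := hA.eigenvectorUnitary * star hB.eigenvectorUnitary
  refine ⟨Q, Q.2, ?_⟩
  calc (Q : Matrix n n 𝕜)ᴴ * A * Q
      = Unitary.conjStarAlgAut 𝕜 _ hB.eigenvectorUnitary
          (Unitary.conjStarAlgAut 𝕜 _ (star hA.eigenvectorUnitary) A) := by
        rw [← Unitary.conjStarAlgAut_mul_apply, ← star_star hB.eigenvectorUnitary, ← star_mul,
          Unitary.conjStarAlgAut_star_apply, star_eq_conjTranspose]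
    _ = B := by
        rw [hA.conjStarAlgAut_star_eigenvectorUnitary, (hA.eigenvalues_eq_eigenvalues_iff hB).2 h,
          ← hB.spectral_theorem]

theorem exists_det_eq_neg_sq_of_isHermitian_of_trace_eq_zero {𝕜 : Type*} [RCLike 𝕜]
    {H : Matrix (Fin 2) (Fin 2) 𝕜} (hH : H.IsHermitian) (htr : H.trace = 0) (hne : H ≠ 0) :
    ∃ r : ℝ, r ≠ 0 ∧ H.det = -(r : 𝕜) ^ 2 := by
  have hsum : hH.eigenvalues 1 = -hH.eigenvalues 0 := by
    rw [hH.trace_eq_sum_eigenvalues, Fin.sum_univ_two] at htr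
    exact (neg_eq_of_add_eq_zero_right (mod_cast htr)).symm
  refine ⟨hH.eigenvalues 0, fun h0 ↦ hne (hH.eigenvalues_eq_zero_iff.1 ?_), ?_⟩
  · rw [h0, neg_zero] at hsum
    exact funext (Fin.forall_fin_two.2 ⟨h0, hsum⟩)
  · rw [hH.det_eq_prod_eigenvalues, Fin.prod_univ_two, hsum]
    push_cast
    ring

theorem exists_unitary_conj_eq_skew {H : Matrix (Fin 2) (Fin 2) ℂ} (hH : H.IsHermitian)
    (htr : H.trace = 0) (hne : H ≠ 0) :
    ∃ Q ∈ unitaryGroup (Fin 2) ℂ, ∃ s : ℂ, s ≠ 0 ∧ Qᴴ * H * Q = !![0, s; -s, 0] := by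
  obtain ⟨r, hr, hdet⟩ : ∃ r : ℝ, r ≠ 0 ∧ H.det = -(r : ℂ) ^ 2 :=
    exists_det_eq_neg_sq_of_isHermitian_of_trace_eq_zero hH htr hne
  let s := r * Complex.I
  let K : Matrix (Fin 2) (Fin 2) ℂ := !![0, s; -s, 0]
  have hK : K.IsHermitian := by
    ext i j
    fin_cases i <;> fin_cases j <;> simp [K, s]
  have htrK : K.trace = 0 := by rw [trace_fin_two_of, add_zero]
  have hdetK : K.det = -(r : ℂ) ^ 2 := by
    rw [det_fin_two_of]
    linear_combination (r : ℂ) ^ 2 * Complex.I_sq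
  have hchar : H.charpoly = K.charpoly := by
    rw [charpoly_fin_two, charpoly_fin_two, htr, hdet, htrK, hdetK]
  obtain ⟨Q, hQ, hQH⟩ := exists_unitary_conj_eq_of_isHermitian_of_charpoly_eq hH hK hchar
  exact ⟨Q, hQ, s, mul_ne_zero (mod_cast hr) Complex.I_ne_zero, hQH⟩

theorem exists_isHermitian_trace_eq_zero_trace_mul_eq_zero {n : Type*} [Fintype n] [Nontrivial n]
    (T : Matrix n n ℂ) :
    ∃ H : Matrix n n ℂ, H.IsHermitian ∧ H.trace = 0 ∧ H ≠ 0 ∧ (H * T).trace = 0 := by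
  classical
  obtain ⟨i, j, hij⟩ := exists_pair_ne n
  let H : ℝ × ℂ →ₗ[ℝ] Matrix n n ℂ :=
    { toFun p :=
        single i i (p.1 : ℂ) - single j j (p.1 : ℂ) + single i j p.2 + single j i (star p.2)
      map_add' p q := by
        simp only [Prod.fst_add, Prod.snd_add, Complex.ofReal_add, star_add, single_add]
        abel
      map_smul' c p := by simp [smul_add, smul_sub, smul_single] }
  obtain ⟨p, hp, hp0⟩ := (Submodule.ne_bot_iff _).1 <| LinearMap.ker_ne_bot_of_finrank_lt
    (f := traceLinearMap n ℝ ℂ ∘ₗ LinearMap.mulRight ℝ T ∘ₗ H) (by simp)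
  refine ⟨H p, ?_, ?_, fun h0 ↦ hp0 ?_, hp⟩
  · change (H p)ᴴ = H p
    simp only [H, LinearMap.coe_mk, AddHom.coe_mk, conjTranspose_add, conjTranspose_sub,
      conjTranspose_single, Complex.star_def, Complex.conj_ofReal, Complex.conj_conj]
    abel
  · simp [H, hij, hij.symm]
  · have hfst : p.1 = 0 := by simpa [H, single_apply, hij, hij.symm] using congr_fun₂ h0 i i
    have hsnd : p.2 = 0 := by simpa [H, single_apply, hij, hij.symm] using congr_fun₂ h0 i j
    exact Prod.ext hfst hsnd

theorem isSymm_of_trace_skew_mul_eq_zero {R : Type*} [CommRing R] [NoZeroDivisors R]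
    {s : R} (hs : s ≠ 0) {A : Matrix (Fin 2) (Fin 2) R} (h : (!![0, s; -s, 0] * A).trace = 0) :
    A.IsSymm := by
  have hmul : s * (A 1 0 - A 0 1) = 0 := by
    rw [eta_fin_two A, mul_fin_two, trace_fin_two_of] at h
    linear_combination h
  have hoff : A 1 0 = A 0 1 := sub_eq_zero.1 ((mul_eq_zero.1 hmul).resolve_left hs)
  exact IsSymm.ext (by simp [Fin.forall_fin_two, hoff])

theorem trace_unitary_conj_mul_conj {n R : Type*} [Fintype n] [DecidableEq n] [CommRing R]
    [StarRing R] {Q : Matrix n n R} (hQ : Q ∈ unitaryGroup n R) (A B : Matrix n n R) :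
    ((Qᴴ * A * Q) * (Qᴴ * B * Q)).trace = (A * B).trace := by
  have hQQ : Q * Qᴴ = 1 := mem_unitaryGroup_iff.1 hQ
  calc ((Qᴴ * A * Q) * (Qᴴ * B * Q)).trace
      = (Qᴴ * (A * (Q * Qᴴ) * B) * Q).trace := by simp only [Matrix.mul_assoc]
    _ = (A * B).trace := by rw [trace_mul_cycle, hQQ, Matrix.one_mul, Matrix.mul_one]

/-- Every 2 × 2 complex matrix is UECSM. -/
theorem two_by_two_UECSM (T : Matrix (Fin 2) (Fin 2) ℂ) : UECSM T := by
  obtain ⟨H, hH, htr, hne, hTH⟩ := exists_isHermitian_trace_eq_zero_trace_mul_eq_zero T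
  obtain ⟨Q, hQ, s, hs, hQH⟩ := exists_unitary_conj_eq_skew hH htr hne
  refine ⟨Q, mem_unitaryGroup_iff'.1 hQ, mem_unitaryGroup_iff.1 hQ, ?_⟩
  apply isSymm_of_trace_skew_mul_eq_zero hs
  rw [← hQH, trace_unitary_conj_mul_conj hQ, hTH]
end

section
/- For any n×n complex matrix T and any k ≥ 1, T is UECSM if and only if the (n+k)×(n+k) block-diagonal matrix T ⊕ 0 (with T in the upper-left block and the k×k zero matrix in the lower-right block) is UECSM. -/
open Matrix BigOperators

/-!
`T` is UECSM exactly when some symmetric `S` satisfies `T * S = S * Tᵀ` and `T * (S * Sᴴ) = T`, and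
this criterion passes between `T` and `T ⊕ 0` block by block, since the first equation for `T ⊕ 0`
forces `T` to annihilate the off-diagonal block of `S`.

If `T` becomes symmetric under the unitary `Q`, take `S = Q * Qᵀ`. Conversely, let
`S = U * D * Uᵀ` be the Takagi factorization and put `X = Uᴴ * T * U`. The two equations become
`X * D = D * Xᵀ` and `X * (D * D) = X`. The second reads `X * (D - 1) * (D + 1) = 0`, and `D + 1` is
invertible because `D ≥ 0`, so `X * D = X` and `X = D * Xᵀ = (X * D)ᵀ = Xᵀ`.

For the factorization, the antilinear map `x ↦ S x̄` has a positive square; adjusting an eigenvector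
of the square yields a vector that the map itself scales by a nonnegative factor, and the orthogonal
complement of this vector is invariant.
-/

open Module
open scoped InnerProductSpace

section ConjSymmetric

variable {V : Type*} [NormedAddCommGroup V] [InnerProductSpace ℂ V]

/-- An antilinear map `R` is *conjugate-symmetric* if `⟪R x, y⟫ = ⟪R y, x⟫`; on coordinate space
these are the maps `x ↦ A x̄` with `A` a symmetric matrix, and diagonalizing them gives the Takagi
factorization of `A`. -/
def IsConjSymmetric (R : V →ₗ⋆[ℂ] V) : Prop :=
  ∀ x y, ⟪R x, y⟫_ℂ = ⟪R y, x⟫_ℂ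

namespace IsConjSymmetric

variable {R : V →ₗ⋆[ℂ] V}

theorem restrict (hR : IsConjSymmetric R) {W : Submodule ℂ V} (hW : ∀ x ∈ W, R x ∈ W) :
    IsConjSymmetric (R.restrict hW) :=
  fun x y ↦ hR x y

theorem map_mem_orthogonal (hR : IsConjSymmetric R) {W : Submodule ℂ V}
    (hW : ∀ x ∈ W, R x ∈ W) {x : V} (hx : x ∈ Wᗮ) : R x ∈ Wᗮ := by
  rw [Submodule.mem_orthogonal'] at hx ⊢
  intro w hw
  rw [hR, inner_eq_zero_symm]
  exact hx _ (hW w hw)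

theorem isPositive_comp_self (hR : IsConjSymmetric R) : (R ∘ₛₗ R : V →ₗ[ℂ] V).IsPositive := by
  refine ⟨fun x y ↦ ?_, fun x ↦ ?_⟩
  · calc
      ⟪R (R x), y⟫_ℂ = ⟪R y, R x⟫_ℂ := hR _ _
      _ = starRingEnd ℂ ⟪R (R y), x⟫_ℂ := by rw [← inner_conj_symm, hR (R y)]
      _ = ⟪x, R (R y)⟫_ℂ := inner_conj_symm _ _
  · rw [LinearMap.comp_apply, hR]
    exact inner_self_nonneg

theorem exists_ne_zero_apply_apply_eq_smul [FiniteDimensional ℂ V] [Nontrivial V]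
    (hR : IsConjSymmetric R) :
    ∃ x ≠ 0, ∃ σ : ℝ, 0 ≤ σ ∧ R (R x) = (σ * σ : ℂ) • x := by
  have hpos := hR.isPositive_comp_self
  let i : Fin (finrank ℂ V) := ⟨0, finrank_pos⟩
  obtain ⟨x, hx⟩ := (hpos.isSymmetric.hasEigenvalue_eigenvalues rfl i).exists_hasEigenvector
  refine ⟨x, hx.2, √(hpos.isSymmetric.eigenvalues rfl i), Real.sqrt_nonneg _, ?_⟩
  rw [← Complex.ofReal_mul, Real.mul_self_sqrt (hpos.nonneg_eigenvalues rfl i)]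
  exact hx.apply_eq_smul

theorem exists_norm_eq_one_apply_eq_smul [FiniteDimensional ℂ V] [Nontrivial V]
    (hR : IsConjSymmetric R) :
    ∃ v, ‖v‖ = 1 ∧ ∃ σ : ℝ, 0 ≤ σ ∧ R v = (σ : ℂ) • v := by
  obtain ⟨x, hx, σ, hσ, hRRx⟩ := hR.exists_ne_zero_apply_apply_eq_smul
  -- `R x + σ x` is an eigenvector; if it vanishes, antilinearity turns `R x = -σ x` into
  -- `R (i x) = σ (i x)`.
  obtain ⟨u, hu, hRu⟩ : ∃ u ≠ 0, R u = (σ : ℂ) • u := by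
    by_cases h : R x + (σ : ℂ) • x = 0
    · refine ⟨Complex.I • x, smul_ne_zero Complex.I_ne_zero hx, ?_⟩
      rw [map_smulₛₗ, eq_neg_of_add_eq_zero_left h, Complex.conj_I, smul_neg, neg_smul, neg_neg,
        smul_comm]
    · refine ⟨R x + (σ : ℂ) • x, h, ?_⟩
      rw [map_add, hRRx, map_smulₛₗ, Complex.conj_ofReal, smul_add, smul_smul, add_comm]
  refine ⟨((‖u‖⁻¹ : ℝ) : ℂ) • u, ?_, σ, hσ, ?_⟩
  · rw [Complex.coe_smul, norm_smul, norm_inv, norm_norm, inv_mul_cancel₀ (norm_ne_zero_iff.2 hu)]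
  · rw [map_smulₛₗ, Complex.conj_ofReal, hRu, smul_comm]

theorem exists_orthonormal_apply_eq_smul [FiniteDimensional ℂ V] (hR : IsConjSymmetric R) {n : ℕ}
    (hn : finrank ℂ V = n) :
    ∃ (v : Fin n → V) (σ : Fin n → ℝ), Orthonormal ℂ v ∧ 0 ≤ σ ∧
      ∀ i, R (v i) = (σ i : ℂ) • v i := by
  induction n generalizing V with
  | zero => exact ⟨Fin.elim0, Fin.elim0, by simp, by simp, by simp⟩
  | succ n ih =>
    have : Nontrivial V := nontrivial_of_finrank_pos (R := ℂ) (by lia)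
    have : Fact (finrank ℂ V = n + 1) := ⟨hn⟩
    obtain ⟨v, hv, s, hs, hRv⟩ := hR.exists_norm_eq_one_apply_eq_smul
    have hspan : ∀ x ∈ ℂ ∙ v, R x ∈ ℂ ∙ v := by
      intro x hx
      obtain ⟨c, rfl⟩ := Submodule.mem_span_singleton.1 hx
      rw [map_smulₛₗ, hRv]
      exact Submodule.smul_mem _ _ (Submodule.smul_mem _ _ (Submodule.mem_span_singleton_self v))
    have hperp : ∀ x ∈ (ℂ ∙ v)ᗮ, R x ∈ (ℂ ∙ v)ᗮ := fun x ↦ hR.map_mem_orthogonal hspan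
    obtain ⟨w, σ, hw, hσ, hRw⟩ := ih (hR.restrict hperp)
      (Submodule.finrank_orthogonal_span_singleton (norm_ne_zero_iff.1 (by simp [hv])))
    refine ⟨vecCons v (fun i ↦ w i), vecCons s σ, orthonormal_vecCons_iff.2 ⟨hv, fun i ↦ ?_, ?_⟩,
      Fin.forall_fin_succ.2 ⟨hs, hσ⟩, Fin.forall_fin_succ.2 ⟨hRv, fun i ↦ ?_⟩⟩
    · exact Submodule.mem_orthogonal_singleton_iff_inner_right.1 (w i).2
    · exact hw.comp_linearIsometry (ℂ ∙ v)ᗮ.subtypeₗᵢ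
    · exact congrArg Subtype.val (hRw i)

theorem exists_orthonormalBasis_apply_eq_smul [FiniteDimensional ℂ V] (hR : IsConjSymmetric R)
    {ι : Type*} [Fintype ι] (hι : finrank ℂ V = Fintype.card ι) :
    ∃ (b : OrthonormalBasis ι ℂ V) (σ : ι → ℝ), 0 ≤ σ ∧ ∀ i, R (b i) = (σ i : ℂ) • b i := by
  obtain ⟨v, σ, hv, hσ, hRv⟩ := hR.exists_orthonormal_apply_eq_smul hι
  have hspan : ⊤ ≤ Submodule.span ℂ (Set.range v) :=
    (hv.linearIndependent.span_eq_top_of_card_eq_finrank' (by simp [hι])).ge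
  let e := Fintype.equivFin ι
  refine ⟨(OrthonormalBasis.mk hv hspan).reindex e.symm, σ ∘ e, fun i ↦ hσ (e i), fun i ↦ ?_⟩
  simpa using hRv (e i)

end IsConjSymmetric

end ConjSymmetric

section Takagi

variable {m : Type*} [Fintype m]

/-- The antilinear map `x ↦ A x̄` on Euclidean space, used to read symmetry of the matrix `A` as
conjugate-symmetry of a map. -/
def mulVecStar (A : Matrix m m ℂ) : EuclideanSpace ℂ m →ₗ⋆[ℂ] EuclideanSpace ℂ m where
  toFun x := WithLp.toLp 2 (A *ᵥ star x.ofLp)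
  map_add' x y := by simp [mulVec_add]
  map_smul' c x := by simp [mulVec_smul]

theorem isConjSymmetric_mulVecStar {A : Matrix m m ℂ} (hA : A.IsSymm) :
    IsConjSymmetric (mulVecStar A) := by
  intro x y
  calc
    ⟪mulVecStar A x, y⟫_ℂ = star (A *ᵥ star x.ofLp) ⬝ᵥ y.ofLp := by
      rw [EuclideanSpace.inner_eq_star_dotProduct, dotProduct_comm]; rfl
    _ = star (A *ᵥ star y.ofLp) ⬝ᵥ x.ofLp := by
      rw [star_mulVec, star_mulVec, star_star, star_star, ← dotProduct_mulVec, dotProduct_comm,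
        ← vecMul_transpose, (hA.conjTranspose).eq]
    _ = ⟪mulVecStar A y, x⟫_ℂ := by
      rw [EuclideanSpace.inner_eq_star_dotProduct, dotProduct_comm]; rfl

theorem exists_unitary_eq_mul_diagonal_mul_transpose [DecidableEq m] {A : Matrix m m ℂ}
    (hA : A.IsSymm) :
    ∃ U ∈ unitaryGroup m ℂ, ∃ σ : m → ℝ, 0 ≤ σ ∧
      A = U * diagonal (fun i ↦ (σ i : ℂ)) * Uᵀ := by
  obtain ⟨b, σ, hσ, hb⟩ :=
    (isConjSymmetric_mulVecStar hA).exists_orthonormalBasis_apply_eq_smul finrank_euclideanSpace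
  let U := (EuclideanSpace.basisFun m ℂ).toBasis.toMatrix b
  have hU : U ∈ unitaryGroup m ℂ :=
    (EuclideanSpace.basisFun m ℂ).toMatrix_orthonormalBasis_mem_unitary b
  have hUU : Uᵀᴴ * Uᵀ = 1 := mem_unitaryGroup_iff'.1 (transpose_mem_unitaryGroup_iff.2 hU)
  have hAU : A * Uᵀᴴ = U * diagonal (fun i ↦ (σ i : ℂ)) := by
    ext i j
    rw [mul_diagonal, mul_comm]
    exact congrArg (fun x ↦ x i) (hb j)
  exact ⟨U, hU, σ, hσ, by rw [← hAU, Matrix.mul_assoc, hUU, Matrix.mul_one]⟩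

end Takagi

theorem mul_diagonal_eq_self_of_mul_sq_eq_self {R l m : Type*} [Ring R] [NoZeroDivisors R]
    [Fintype m] [DecidableEq m] {X : Matrix l m R} {d : m → R} (hd : ∀ j, d j ≠ -1)
    (hX : X * (diagonal d * diagonal d) = X) : X * diagonal d = X := by
  ext i j
  have hij : X i j * (d j * d j) = X i j := by
    simpa [diagonal_mul_diagonal] using congrFun₂ hX i j
  rw [mul_diagonal]
  by_cases h : X i j = 0
  · rw [h, zero_mul]
  · have hdd : d j * d j = 1 := (mul_eq_left₀ h).1 hij
    rw [(mul_self_eq_one_iff.1 hdd).resolve_right (hd j), mul_one]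

theorem isSymm_of_mul_diagonal_eq_diagonal_mul_transpose {R m : Type*} [CommRing R]
    [NoZeroDivisors R] [Fintype m] [DecidableEq m] {X : Matrix m m R} {d : m → R}
    (hd : ∀ j, d j ≠ -1) (hXd : X * diagonal d = diagonal d * Xᵀ)
    (hX : X * (diagonal d * diagonal d) = X) : X.IsSymm := by
  have hX' : X * diagonal d = X := mul_diagonal_eq_self_of_mul_sq_eq_self hd hX
  calc
    Xᵀ = (X * diagonal d)ᵀ := by rw [hX']
    _ = diagonal d * Xᵀ := by rw [transpose_mul, diagonal_transpose]
    _ = X := by rw [← hXd, hX']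

section Criterion

variable {m : Type*} [Fintype m] [DecidableEq m]

theorem UECSM_of_mul_eq_mul_transpose {T S : Matrix m m ℂ} (hS : S.IsSymm) (hTS : T * S = S * Tᵀ)
    (hTSS : T * (S * Sᴴ) = T) : UECSM T := by
  obtain ⟨U, hU, σ, hσ, hSU⟩ := exists_unitary_eq_mul_diagonal_mul_transpose hS
  set D := diagonal (fun i ↦ (σ i : ℂ)) with hD
  have hUU : Uᴴ * U = 1 := mem_unitaryGroup_iff'.1 hU
  have hUT : Uᵀ * Uᴴᵀ = 1 := by rw [← transpose_mul, hUU, transpose_one]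
  have hSD : S * Uᴴᵀ = U * D := by rw [hSU, mul_assoc, hUT, mul_one]
  have hDS : Uᴴ * S = D * Uᵀ := by rw [hSU, ← mul_assoc, ← mul_assoc, hUU, one_mul]
  have hSDD : S * Sᴴ * U = U * (D * D) := by
    have hSU_conj : Sᴴ * U = Uᴴᵀ * D := by
      calc
        Sᴴ * U = (Uᴴ * S)ᴴ := by rw [conjTranspose_mul, conjTranspose_conjTranspose]
        _ = Uᴴᵀ * Dᴴ := by rw [hDS, conjTranspose_mul]; rfl
        _ = Uᴴᵀ * D := by simp [hD, diagonal_conjTranspose, Pi.star_def]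
    rw [mul_assoc, hSU_conj, ← mul_assoc, hSD, mul_assoc]
  refine ⟨U, hUU, mem_unitaryGroup_iff.1 hU,
    isSymm_of_mul_diagonal_eq_diagonal_mul_transpose (d := fun i ↦ (σ i : ℂ)) (fun j ↦ ?_) ?_ ?_⟩
  · have hσj : 0 ≤ σ j := hσ j
    exact_mod_cast (show σ j ≠ -1 by linarith)
  · calc
      Uᴴ * T * U * D = Uᴴ * (T * S) * Uᴴᵀ := by rw [mul_assoc, ← hSD]; noncomm_ring
      _ = Uᴴ * S * Tᵀ * Uᴴᵀ := by rw [hTS]; noncomm_ring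
      _ = D * (Uᴴ * T * U)ᵀ := by rw [hDS, transpose_mul, transpose_mul]; noncomm_ring
  · calc
      Uᴴ * T * U * (D * D) = Uᴴ * (T * (S * Sᴴ)) * U := by rw [mul_assoc, ← hSDD]; noncomm_ring
      _ = Uᴴ * T * U := by rw [hTSS]

theorem UECSM_iff_exists_isSymm_mul_eq_mul_transpose {T : Matrix m m ℂ} :
    UECSM T ↔ ∃ S : Matrix m m ℂ, S.IsSymm ∧ T * S = S * Tᵀ ∧ T * (S * Sᴴ) = T := by
  constructor
  · rintro ⟨Q, hQ, hQ', hsymm⟩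
    have hQT : Qᵀ * Qᵀᴴ = 1 :=
      mem_unitaryGroup_iff.1 (transpose_mem_unitaryGroup_iff.2 (mem_unitaryGroup_iff'.2 hQ))
    refine ⟨Q * Qᵀ, by simp [IsSymm], ?_, ?_⟩
    · calc
        T * (Q * Qᵀ) = Q * Qᴴ * T * Q * Qᵀ := by rw [hQ']; noncomm_ring
        _ = Q * (Qᴴ * T * Q) * Qᵀ := by noncomm_ring
        _ = Q * (Qᴴ * T * Q)ᵀ * Qᵀ := by rw [hsymm]
        _ = Q * Qᵀ * Tᵀ * (Q * Qᴴ)ᵀ := by simp only [transpose_mul]; noncomm_ring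
        _ = Q * Qᵀ * Tᵀ := by rw [hQ', transpose_one, mul_one]
    · rw [conjTranspose_mul, mul_assoc, ← mul_assoc Qᵀ, hQT, one_mul, hQ', mul_one]
  · rintro ⟨S, hS, hTS, hTSS⟩
    exact UECSM_of_mul_eq_mul_transpose hS hTS hTSS

end Criterion

theorem UECSM_iff_fromBlocks_zero_general {m l : Type*} [Fintype m] [DecidableEq m] [Fintype l]
    [DecidableEq l] (T : Matrix m m ℂ) :
    UECSM T ↔ UECSM (fromBlocks T 0 0 (0 : Matrix l l ℂ)) := by
  rw [UECSM_iff_exists_isSymm_mul_eq_mul_transpose, UECSM_iff_exists_isSymm_mul_eq_mul_transpose]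
  constructor
  · rintro ⟨S, hS, hTS, hTSS⟩
    refine ⟨fromBlocks S 0 0 0, hS.fromBlocks (transpose_zero ..) isSymm_zero, ?_, ?_⟩ <;>
      simp [fromBlocks_transpose, fromBlocks_conjTranspose, fromBlocks_multiply, hTS, hTSS]
  · rintro ⟨S, hS, hTS, hTSS⟩
    obtain ⟨A, B, C, D, rfl⟩ : ∃ A B C D, S = fromBlocks A B C D :=
      ⟨_, _, _, _, (fromBlocks_toBlocks S).symm⟩
    simp only [fromBlocks_transpose, fromBlocks_conjTranspose, fromBlocks_multiply, fromBlocks_inj,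
      Matrix.zero_mul, Matrix.mul_zero, add_zero, transpose_zero] at hTS hTSS
    have hTB : T * B = 0 := hTS.2.1
    refine ⟨A, (isSymm_fromBlocks_iff.1 hS).1, hTS.1, ?_⟩
    calc
      T * (A * Aᴴ) = T * (A * Aᴴ + B * Bᴴ) := by
        rw [Matrix.mul_add, ← Matrix.mul_assoc T B, hTB, Matrix.zero_mul, add_zero]
      _ = T := hTSS.1

/-- `T` is UECSM if and only if `T ⊕ 0` is UECSM. -/
theorem UECSM_iff_fromBlocks_zero {n k : ℕ} (hk : 1 ≤ k)
    (T : Matrix (Fin n) (Fin n) ℂ) :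
    UECSM T ↔ UECSM (Matrix.fromBlocks T 0 0 (0 : Matrix (Fin k) (Fin k) ℂ)) :=
  UECSM_iff_fromBlocks_zero_general T
end

section
/- The 3×3 matrix with rows (0, 1, 1), (0, 1, 0), (0, 0, 2) is not UECSM. -/
open Matrix BigOperators

/-!
A complex symmetric matrix `S` and its adjoint are both fixed by transposition, which reverses
products and preserves traces. So the trace of a word in `S` and `Sᴴ` does not change when the word
is reversed, and this property passes to every matrix unitarily equivalent to `S`. For the word
`(TᴴT)²(TTᴴ)`, with reversal `(TᴴT)(TTᴴ)²`, the two traces differ when `T` is the given matrix: they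
are `109` and `108`.
-/

section Trace

variable {R m : Type*} [Fintype m] [DecidableEq m]

theorem trace_reverse_prod_of_isSymm [CommSemiring R] {l : List (Matrix m m R)}
    (hl : ∀ A ∈ l, A.IsSymm) : l.reverse.prod.trace = l.prod.trace := by
  have map_transpose : l.map transpose = l := by simpa using List.map_congr_left (g := id) hl
  rw [← trace_transpose l.prod, transpose_list_prod, map_transpose]

theorem trace_conjStarAlgAut [CommRing R] [StarRing R] (U : unitary (Matrix m m R))
    (A : Matrix m m R) : (Unitary.conjStarAlgAut R (Matrix m m R) U A).trace = A.trace :=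
  trace_units_conj (Unitary.toUnits U) A

end Trace

section UECSM

variable {m : Type*} [Fintype m] [DecidableEq m] {T : Matrix m m ℂ}

theorem uecsm_iff_exists_isSymm :
    UECSM T ↔ ∃ U : unitary (Matrix m m ℂ), (Unitary.conjStarAlgAut ℂ _ U T).IsSymm := by
  constructor
  · rintro ⟨Q, hQ, hQ', hsymm⟩
    exact ⟨star ⟨Q, hQ, hQ'⟩, by simpa [IsSymm, star_eq_conjTranspose] using hsymm⟩
  · rintro ⟨U, hU⟩
    exact ⟨star U, by simp [← star_eq_conjTranspose], by simp [← star_eq_conjTranspose],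
      by simpa [IsSymm, ← star_eq_conjTranspose] using hU⟩

theorem UECSM.trace_reverse_prod (hT : UECSM T) {l : List (Matrix m m ℂ)}
    (hl : ∀ A ∈ l, A = T ∨ A = Tᴴ) : l.reverse.prod.trace = l.prod.trace := by
  obtain ⟨U, hU⟩ := uecsm_iff_exists_isSymm.mp hT
  let φ := Unitary.conjStarAlgAut ℂ (Matrix m m ℂ) U
  have isSymm_map : ∀ B ∈ l.map φ, B.IsSymm := by
    simp only [List.forall_mem_map]
    intro A hA
    obtain rfl | rfl := hl A hA
    · exact hU
    · rw [← star_eq_conjTranspose, map_star]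
      exact hU.conjTranspose
  calc l.reverse.prod.trace
      = (l.map φ).reverse.prod.trace := by
        rw [← trace_conjStarAlgAut U, map_list_prod, List.map_reverse]
    _ = (l.map φ).prod.trace := trace_reverse_prod_of_isSymm isSymm_map
    _ = l.prod.trace := by rw [← map_list_prod, trace_conjStarAlgAut]

theorem UECSM.trace_sq_mul_eq_trace_mul_sq (hT : UECSM T) :
    ((Tᴴ * T) ^ 2 * (T * Tᴴ)).trace = ((Tᴴ * T) * (T * Tᴴ) ^ 2).trace := by
  have reversal := hT.trace_reverse_prod (l := [Tᴴ, T, Tᴴ, T, T, Tᴴ]) (by simp)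
  simpa [sq, Matrix.mul_assoc] using reversal.symm

end UECSM

/-- The matrix `[[0,1,1],[0,1,0],[0,0,2]]` is not UECSM. -/
theorem not_UECSM_example :
    ¬ UECSM !![(0 : ℂ), 1, 1; 0, 1, 0; 0, 0, 2] := by
  intro hT
  have trace_eq := hT.trace_sq_mul_eq_trace_mul_sq
  set T := !![(0 : ℂ), 1, 1; 0, 1, 0; 0, 0, 2]
  have adjoint : Tᴴ = !![0, 0, 0; 1, 1, 0; 1, 0, 2] := by
    ext i j
    fin_cases i <;> fin_cases j <;> simp [T]
  have gram_columns : Tᴴ * T = !![0, 0, 0; 0, 2, 1; 0, 1, 5] := by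
    rw [adjoint, mul_fin_three]
    norm_num
  have gram_rows : T * Tᴴ = !![2, 1, 2; 1, 1, 0; 2, 0, 4] := by
    rw [adjoint, mul_fin_three]
    norm_num
  have trace_sq_mul : ((Tᴴ * T) ^ 2 * (T * Tᴴ)).trace = 109 := by
    rw [gram_columns, gram_rows, sq, mul_fin_three, mul_fin_three, trace_fin_three_of]
    norm_num
  have trace_mul_sq : ((Tᴴ * T) * (T * Tᴴ) ^ 2).trace = 108 := by
    rw [gram_columns, gram_rows, sq, mul_fin_three, mul_fin_three, trace_fin_three_of]
    norm_num
  norm_num [trace_sq_mul, trace_mul_sq] at trace_eq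
end

section
/- The 4×4 integer matrix with rows (5, 0, −1, 3), (2, 4, 1, 2), (2, −2, 6, −2), (0, −2, 1, 4), regarded as a complex matrix, is not UECSM. -/
open Matrix BigOperators

/-!
If `Qᴴ T Q` is symmetric with `Q` unitary, then `U = Q Qᵀ` is a unitary matrix satisfying
`U Tᵀ = T U`. Taking adjoints gives `U (Tᴴ)ᵀ = Tᴴ U` with the same `U`, so that
`A ↦ U Aᵀ U⁻¹` is a trace-preserving antiautomorphism fixing both `T` and `Tᴴ`. Hence every word
in `T` and `Tᴴ` has the same trace as the reversed word. The 4 × 4 matrix violates this for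
the word `T² Tᴴ T (Tᴴ)²`.
-/

section Intertwining

variable {m R : Type*} [Fintype m] [DecidableEq m]

theorem semiconjBy_transpose_reverse_prod [CommSemiring R] {U : Matrix m m R}
    {l : List (Matrix m m R)} (hl : ∀ A ∈ l, SemiconjBy U Aᵀ A) :
    SemiconjBy U l.reverse.prodᵀ l.prod := by
  induction l with
  | nil => simp
  | cons A l ih =>
    obtain ⟨hA, hl⟩ := List.forall_mem_cons.1 hl
    simpa using hA.mul_right (ih hl)

theorem trace_eq_of_semiconjBy [CommSemiring R] {U : (Matrix m m R)ˣ} {A B : Matrix m m R}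
    (h : SemiconjBy ↑U A B) : A.trace = B.trace := by
  rw [← trace_units_conj U A, h.eq, Units.mul_inv_cancel_right]

theorem trace_reverse_prod_of_semiconjBy_transpose [CommSemiring R] {U : (Matrix m m R)ˣ}
    {l : List (Matrix m m R)} (hl : ∀ A ∈ l, SemiconjBy ↑U Aᵀ A) :
    l.reverse.prod.trace = l.prod.trace := by
  rw [← trace_transpose]
  exact trace_eq_of_semiconjBy (semiconjBy_transpose_reverse_prod hl)

theorem semiconjBy_star_of_mem_unitary {M : Type*} [Monoid M] [StarMul M] {u a b : M}
    (hu : u ∈ unitary M) (h : SemiconjBy u a b) : SemiconjBy u (star a) (star b) := by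
  have hstar : SemiconjBy (star u) (star b) (star a) := h.star_star_star
  exact hstar.units_inv_symm_left (a := (Unitary.toUnits ⟨u, hu⟩)⁻¹)

theorem semiconjBy_transpose_conjTranspose [CommRing R] [StarRing R] {U T : Matrix m m R}
    (hU : U ∈ unitaryGroup m R) (h : SemiconjBy U Tᵀ T) : SemiconjBy U Tᴴᵀ Tᴴ := by
  rw [← conjTranspose_transpose_eq_transpose_conjTranspose]
  exact semiconjBy_star_of_mem_unitary hU h

end Intertwining

namespace UECSM

variable {m : Type*} [Fintype m] [DecidableEq m] {T : Matrix m m ℂ}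

theorem exists_unitary_semiconjBy_transpose (hT : UECSM T) :
    ∃ U ∈ unitaryGroup m ℂ, SemiconjBy U Tᵀ T := by
  obtain ⟨Q, hQ, hQ', hS⟩ := hT
  have hQ_mem : Q ∈ unitaryGroup m ℂ := ⟨hQ, hQ'⟩
  obtain ⟨S, hS, hTQ⟩ : ∃ S, Sᵀ = S ∧ T * Q = Q * S :=
    ⟨Qᴴ * T * Q, hS, by simp only [← Matrix.mul_assoc, hQ', Matrix.one_mul]⟩
  refine ⟨Q * Qᵀ, mul_mem hQ_mem (transpose_mem_unitaryGroup_iff.2 hQ_mem), ?_⟩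
  calc Q * Qᵀ * Tᵀ = Q * (T * Q)ᵀ := by rw [transpose_mul, Matrix.mul_assoc]
    _ = Q * (Q * S)ᵀ := by rw [hTQ]
    _ = Q * S * Qᵀ := by rw [transpose_mul, hS, Matrix.mul_assoc]
    _ = T * Q * Qᵀ := by rw [hTQ]
    _ = T * (Q * Qᵀ) := Matrix.mul_assoc ..

theorem trace_reverse_prod_s19 (hT : UECSM T) {l : List (Matrix m m ℂ)}
    (hl : ∀ A ∈ l, A = T ∨ A = Tᴴ) : l.reverse.prod.trace = l.prod.trace := by
  obtain ⟨U, hU, hUT⟩ := hT.exists_unitary_semiconjBy_transpose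
  refine trace_reverse_prod_of_semiconjBy_transpose (U := Unitary.toUnits ⟨U, hU⟩)
    fun A hA ↦ ?_
  obtain rfl | rfl := hl A hA
  · exact hUT
  · exact semiconjBy_transpose_conjTranspose hU hUT

end UECSM

/-- The 4 × 4 matrix from Example 5 is not UECSM, even though it passes the
Angle, Grammian, and Parallelepiped tests. -/
theorem not_UECSM_4x4_example :
    ¬ UECSM !![(5 : ℂ), 0, -1, 3; 2, 4, 1, 2; 2, -2, 6, -2; 0, -2, 1, 4] := by
  intro hT
  set T := !![(5 : ℂ), 0, -1, 3; 2, 4, 1, 2; 2, -2, 6, -2; 0, -2, 1, 4]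
  have hT_adj : Tᴴ = !![5, 2, 2, 0; 0, 4, -2, -2; -1, 1, 6, 1; 3, 2, -2, 4] := by
    ext i j
    fin_cases i <;> fin_cases j <;> simp [T]
  have h_word : [T, T, Tᴴ, T, Tᴴ, Tᴴ].prod.trace = 207612 := by
    rw [hT_adj]
    norm_num [T, trace, Fin.sum_univ_succ]
  have h_reverse : [T, T, Tᴴ, T, Tᴴ, Tᴴ].reverse.prod.trace = 207762 := by
    rw [hT_adj]
    norm_num [T, trace, Fin.sum_univ_succ]
  have h_eq := hT.trace_reverse_prod_s19 (l := [T, T, Tᴴ, T, Tᴴ, Tᴴ]) (by simp)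
  rw [h_word, h_reverse] at h_eq
  norm_num at h_eq
end
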